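/- Let 𝔊 be a homothecy invariant collection of open rectangles in ℝⁿ, let μ be a nonzero locally finite nonnegative Borel measure doubling with respect to 𝔊, and let ν be a locally finite nonnegative Borel measure. Suppose there exist γ ∈ (0,1) and c > 0 such that ν({x ∈ ℝⁿ : M_{𝔊,μ}(1_E)(x) > γ}) ≤ c·ν(E) for every Borel set E. Then there exist p₀ > 1 and C > 0 such that for every λ ∈ (0,1) and every Borel set E ⊆ ℝⁿ, ν({x ∈ ℝⁿ : M_{𝔊,μ}(1_E)(x) > λ}) ≤ (C/λ^{p₀})·ν(E); that is, M_{𝔊,μ} is of restricted weak type (p₀, p₀) with respect to ν. -/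

import Mathlib

open MeasureTheory Set Filter
open scoped ENNReal Topology Pointwise

noncomputable section

/-- The maximal operator `M_{𝔅,μ}` associated to a measure `μ` and a collection `𝔅`
of subsets of `ℝⁿ`, applied to `f` at the point `x` (valued in `ℝ≥0∞`; it equals `0`
outside the union of `𝔅`). -/
noncomputable def maxOp {n : ℕ} (μ : Measure (EuclideanSpace ℝ (Fin n)))
    (𝔅 : Set (Set (EuclideanSpace ℝ (Fin n))))
    (f : EuclideanSpace ℝ (Fin n) → ℝ) (x : EuclideanSpace ℝ (Fin n)) : ℝ≥0∞ :=
  ⨆ (B : Set (EuclideanSpace ℝ (Fin n))) (_ : B ∈ 𝔅) (_ : x ∈ B) (_ : 0 < μ B),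
    (∫⁻ y in B, ENNReal.ofReal |f y| ∂μ) / μ B

/-- A collection of sets is homothecy invariant if it is closed under translations and
positive dilations. -/
def HomothecyInvariant {n : ℕ} (𝔅 : Set (Set (EuclideanSpace ℝ (Fin n)))) : Prop :=
  ∀ B ∈ 𝔅, (∀ y : EuclideanSpace ℝ (Fin n), y +ᵥ B ∈ 𝔅) ∧ (∀ s : ℝ, 0 < s → s • B ∈ 𝔅)

/-- `μ` is doubling with respect to the collection `𝔅`, with constant `Δ`: whenever
`B ∈ 𝔅` and a translate of the dilate `2·B` contains `B`, its measure is at most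
`Δ·μ(B)`. -/
def DoublingWrt {n : ℕ} (μ : Measure (EuclideanSpace ℝ (Fin n)))
    (𝔅 : Set (Set (EuclideanSpace ℝ (Fin n)))) (Δ : ℝ) : Prop :=
  ∀ B ∈ 𝔅, ∀ σ : EuclideanSpace ℝ (Fin n),
    B ⊆ σ +ᵥ (2 : ℝ) • B → μ (σ +ᵥ (2 : ℝ) • B) ≤ ENNReal.ofReal Δ * μ B

/-- A member of a basis of convex sets: nonempty, bounded, open and convex. -/
def IsConvexBasisSet {n : ℕ} (B : Set (EuclideanSpace ℝ (Fin n))) : Prop :=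
  B.Nonempty ∧ Bornology.IsBounded B ∧ IsOpen B ∧ Convex ℝ B

/-- An open axis-parallel rectangle in `ℝⁿ`. -/
def IsAxisRect {n : ℕ} (R : Set (EuclideanSpace ℝ (Fin n))) : Prop :=
  ∃ a b : Fin n → ℝ, (∀ i, a i < b i) ∧ R = {x | ∀ i, x i ∈ Set.Ioo (a i) (b i)}

/-- An open rectangle (possibly rotated rectangular parallelepiped) in `ℝⁿ`:
the image of an open axis-parallel rectangle under a rigid motion. -/
def IsRect {n : ℕ} (R : Set (EuclideanSpace ℝ (Fin n))) : Prop :=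
  ∃ (f : EuclideanSpace ℝ (Fin n) ≃ᵢ EuclideanSpace ℝ (Fin n))
    (S : Set (EuclideanSpace ℝ (Fin n))), IsAxisRect S ∧ R = f '' S

/-- An open axis-parallel cube in `ℝⁿ`. -/
def IsAxisCube {n : ℕ} (C : Set (EuclideanSpace ℝ (Fin n))) : Prop :=
  ∃ (a : Fin n → ℝ) (s : ℝ), 0 < s ∧ C = {x | ∀ i, x i ∈ Set.Ioo (a i) (a i + s)}

/-- `M_{𝔅,μ}` is bounded on `L^p(ν)`. -/
def BoundedOnLp {n : ℕ} (μ ν : Measure (EuclideanSpace ℝ (Fin n)))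
    (𝔅 : Set (Set (EuclideanSpace ℝ (Fin n)))) (p : ℝ) : Prop :=
  ∃ C : ℝ≥0∞, C ≠ ⊤ ∧ ∀ f : EuclideanSpace ℝ (Fin n) → ℝ, Measurable f →
    ∫⁻ x, maxOp μ 𝔅 f x ^ p ∂ν ≤ C * ∫⁻ x, ENNReal.ofReal |f x| ^ p ∂ν

/-- The Tauberian condition for `M_{𝔅,μ}` at level `γ`, with constant `c`, with respect
to the measure `ν`. -/
def TauberianCond {n : ℕ} (μ ν : Measure (EuclideanSpace ℝ (Fin n)))
    (𝔅 : Set (Set (EuclideanSpace ℝ (Fin n)))) (γ c : ℝ) : Prop :=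
  ∀ E : Set (EuclideanSpace ℝ (Fin n)), MeasurableSet E →
    ν {x | ENNReal.ofReal γ < maxOp μ 𝔅 (E.indicator 1) x} ≤ ENNReal.ofReal c * ν E

/-- The standard open dyadic box of scale `2^k` and position `m` in `ℝⁿ`. -/
def stdBox (n : ℕ) (k : ℤ) (m : Fin n → ℤ) : Set (Fin n → ℝ) :=
  {x | ∀ i, (m i : ℝ) * 2 ^ k < x i ∧ x i < ((m i : ℝ) + 1) * 2 ^ k}

/-- A parametrization of a rectangular grid: a rigid motion composed with a positive
diagonal scaling. The image of the standard unit box under such a map is a rectangle. -/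
def IsRectParam {n : ℕ} (T : (Fin n → ℝ) → EuclideanSpace ℝ (Fin n)) : Prop :=
  ∃ (f : EuclideanSpace ℝ (Fin n) ≃ᵢ EuclideanSpace ℝ (Fin n)) (l : Fin n → ℝ),
    (∀ i, 0 < l i) ∧
    ∀ x, T x = f ((WithLp.equiv 2 (Fin n → ℝ)).symm (fun i => l i * x i))

/-- The dyadic mesh generated by a rectangle parametrized by `T`. -/
def dyadicMesh {n : ℕ} (T : (Fin n → ℝ) → EuclideanSpace ℝ (Fin n)) :
    Set (Set (EuclideanSpace ℝ (Fin n))) :=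
  {S | ∃ (k : ℤ) (m : Fin n → ℤ), S = T '' stdBox n k m}

/-- `S` is a dyadic descendant of the rectangle `R`, `s` generations inside `R`. -/
def DyadicDescendant {n : ℕ} (R S : Set (EuclideanSpace ℝ (Fin n))) (s : ℕ) : Prop :=
  ∃ T : (Fin n → ℝ) → EuclideanSpace ℝ (Fin n), IsRectParam T ∧
    T '' stdBox n 0 0 = R ∧
    ∃ m : Fin n → ℤ, (∀ i, 0 ≤ m i ∧ m i < 2 ^ s) ∧ S = T '' stdBox n (-(s : ℤ)) m

/-- The family of all homothetic copies (translates and positive dilates) of `R₀`. -/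
def homCopies {n : ℕ} (R₀ : Set (EuclideanSpace ℝ (Fin n))) :
    Set (Set (EuclideanSpace ℝ (Fin n))) :=
  {S | ∃ (y : EuclideanSpace ℝ (Fin n)) (s : ℝ), 0 < s ∧ S = y +ᵥ s • R₀}

/-- Iterated halo sets `H_β^k(E)`: `H_β^0(E) = E` and
`H_β^{k+1}(E) = {x : M_{𝔊,μ}(1_{H_β^k(E)})(x) ≥ β}`. -/
def Hiter {n : ℕ} (μ : Measure (EuclideanSpace ℝ (Fin n)))
    (𝔊 : Set (Set (EuclideanSpace ℝ (Fin n)))) (β : ℝ)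
    (E : Set (EuclideanSpace ℝ (Fin n))) : ℕ → Set (EuclideanSpace ℝ (Fin n))
  | 0 => E
  | k + 1 => {x | ENNReal.ofReal β ≤ maxOp μ 𝔊 ((Hiter μ 𝔊 β E k).indicator 1) x}

/-- The Muckenhoupt `A_{p,𝔅}` condition for a weight `w` (with respect to Lebesgue
measure); here `1 - p/(p-1) = 1 - p'`. -/
def MuckenhouptAp {n : ℕ} (𝔅 : Set (Set (EuclideanSpace ℝ (Fin n))))
    (w : EuclideanSpace ℝ (Fin n) → ℝ) (p : ℝ) : Prop :=
  ∃ C : ℝ≥0∞, C ≠ ⊤ ∧ ∀ B ∈ 𝔅,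
    ((∫⁻ x in B, ENNReal.ofReal (w x) ∂volume) / volume B) *
      (((∫⁻ x in B, ENNReal.ofReal (w x) ^ (1 - p / (p - 1)) ∂volume) / volume B) ^ (p - 1))
      ≤ C

/-- `𝔅` is a Muckenhoupt basis: for every `1 < p < ∞` and every weight `w ∈ A_{p,𝔅}`,
the maximal operator `M_𝔅` is bounded on `L^p(w)`. -/
def MuckenhouptBasis {n : ℕ} (𝔅 : Set (Set (EuclideanSpace ℝ (Fin n)))) : Prop :=
  ∀ p : ℝ, 1 < p → ∀ w : EuclideanSpace ℝ (Fin n) → ℝ, (∀ x, 0 ≤ w x) →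
    LocallyIntegrable w volume → MuckenhouptAp 𝔅 w p →
    BoundedOnLp volume (volume.withDensity fun x => ENNReal.ofReal (w x)) 𝔅 p

end

/-!
The halo of `E` at level `λ` is the union of the sets `R ∈ 𝔊` in which `E` has density larger than
`λ`. Such an `R` is covered by iterating the halo at level `γ`, in a number of steps depending only
on `λ`, `γ` and the doubling constant: an affine map turns the homothets of `R` into the balls of a
norm, for which `μ` is doubling.

* Spheres are `μ`-null, since they are porous and `μ` satisfies the density theorem. Hence the
  measure of a ball depends continuously on its radius and one halo step enlarges any ball to a
  concentric one of `r⁻¹` times its measure, where `γ < r < 1`. As `μ` is doubling, a number of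
  steps independent of the ball quadruples the radius.
* Let `E` be open with density at most `γ` in a ball `B`. Halve `B` repeatedly towards a point of
  `E ∩ B` and stop just before the density of `E` exceeds `γ`. The next ball belongs to the halo,
  hence the stopping ball to an iterate of it, whereas `E` leaves a fraction of at least `1 - γ` of
  the stopping ball uncovered. By Vitali's covering lemma, a bounded number `M` of halo steps thus
  multiplies the density of `E` in `B` by a factor `θ⁻¹ > 1`.

So `{M_{𝔊,μ} 1_E > θ ^ k}` lies in the `M * k`-fold iterate of the halo of `E` at level `γ`, whose
`ν`-measure is at most `c ^ (M * k) * ν E`; taking `k` of order `log (1 / λ)` makes this a power of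
`1 / λ`. Outer regularity of `ν` reduces the case of arbitrary `E` to that of open `E`.
-/

open Metric TopologicalSpace
open scoped NNReal

section Halo

variable {X Y : Type*} [MeasurableSpace X] [MeasurableSpace Y] {μ : Measure X} {𝔊 : Set (Set X)}
  {𝔅 : Set (Set Y)} {g : ℝ≥0∞} {A B : Set X} {e : Y → X}

/-- The halo of `E` at level `g`: the union of the members of `𝔊` in which `E` has `μ`-density
larger than `g`. Members of measure `0` have no density, and the product form leaves them out. -/
def halo (μ : Measure X) (𝔊 : Set (Set X)) (g : ℝ≥0∞) (E : Set X) : Set X :=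
  ⋃₀ {B ∈ 𝔊 | g * μ B < μ (E ∩ B)}

lemma subset_halo (hB : B ∈ 𝔊) (h : g * μ B < μ (A ∩ B)) : B ⊆ halo μ 𝔊 g A :=
  subset_sUnion_of_mem ⟨hB, h⟩

lemma halo_mono (h : A ⊆ B) : halo μ 𝔊 g A ⊆ halo μ 𝔊 g B :=
  sUnion_mono fun _ hC => ⟨hC.1, hC.2.trans_le <| by gcongr⟩

lemma halo_anti {g' : ℝ≥0∞} (h : g ≤ g') : halo μ 𝔊 g' A ⊆ halo μ 𝔊 g A :=
  sUnion_mono fun _ hC => ⟨hC.1, hC.2.trans_le' <| by gcongr⟩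

lemma isOpen_halo [TopologicalSpace X] (h𝔊 : ∀ B ∈ 𝔊, IsOpen B) : IsOpen (halo μ 𝔊 g A) :=
  isOpen_sUnion fun B hB => h𝔊 B hB.1

lemma isOpen_iterate_halo [TopologicalSpace X] (h𝔊 : ∀ B ∈ 𝔊, IsOpen B) (hA : IsOpen A) (k : ℕ) :
    IsOpen ((halo μ 𝔊 g)^[k] A) := by
  cases k with
  | zero => exact hA
  | succ k => rw [Function.iterate_succ_apply']; exact isOpen_halo h𝔊

lemma halo_comap_subset (he : MeasurableEmbedding e) (h𝔅 : ∀ B ∈ 𝔅, e '' B ∈ 𝔊) (A : Set X) :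
    halo (μ.comap e) 𝔅 g (e ⁻¹' A) ⊆ e ⁻¹' halo μ 𝔊 g A := by
  refine sUnion_subset fun B ⟨hB, hlt⟩ => image_subset_iff.1 (subset_halo (h𝔅 B hB) ?_)
  rwa [he.comap_apply, he.comap_apply, inter_comm, image_inter_preimage, inter_comm] at hlt

lemma iterate_halo_comap_subset (he : MeasurableEmbedding e) (h𝔅 : ∀ B ∈ 𝔅, e '' B ∈ 𝔊)
    (A : Set X) (k : ℕ) :
    (halo (μ.comap e) 𝔅 g)^[k] (e ⁻¹' A) ⊆ e ⁻¹' (halo μ 𝔊 g)^[k] A := by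
  induction k with
  | zero => rfl
  | succ k ih =>
    rw [Function.iterate_succ_apply', Function.iterate_succ_apply']
    exact (halo_mono ih).trans (halo_comap_subset he h𝔅 _)

lemma measure_iterate_halo_le [TopologicalSpace X] {ν : Measure X} (h𝔊 : ∀ B ∈ 𝔊, IsOpen B)
    {K : ℝ≥0∞} (h : ∀ E, IsOpen E → ν (halo μ 𝔊 g E) ≤ K * ν E) {E : Set X} (hE : IsOpen E)
    (k : ℕ) : ν ((halo μ 𝔊 g)^[k] E) ≤ K ^ k * ν E := by
  induction k with
  | zero => simp
  | succ k ih =>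
    rw [Function.iterate_succ_apply', pow_succ', mul_assoc]
    exact (h _ (isOpen_iterate_halo h𝔊 hE k)).trans (by gcongr)

end Halo

section BallDoubling

/-- `μ` is doubling with constant `D` for the open balls of `X`. Contrary to
`IsUnifLocDoublingMeasure`, balls of all radii are considered. -/
def IsBallDoubling {X : Type*} [PseudoMetricSpace X] [MeasurableSpace X] (μ : Measure X)
    (D : ℝ≥0) : Prop :=
  ∀ (x : X) (s : ℝ), 0 < s → μ (ball x (2 * s)) ≤ D * μ (ball x s)

namespace IsBallDoubling

variable {X : Type*} [PseudoMetricSpace X] [MeasurableSpace X] {μ : Measure X} {D : ℝ≥0}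

lemma measure_ball_pow_le (hμ : IsBallDoubling μ D) (x : X) {s : ℝ} (hs : 0 < s) (k : ℕ) :
    μ (ball x (2 ^ k * s)) ≤ D ^ k * μ (ball x s) := by
  induction k with
  | zero => simp
  | succ k ih =>
    calc μ (ball x (2 ^ (k + 1) * s)) = μ (ball x (2 * (2 ^ k * s))) := by congr 2; ring
      _ ≤ D * μ (ball x (2 ^ k * s)) := hμ x _ (by positivity)
      _ ≤ D * (D ^ k * μ (ball x s)) := by gcongr
      _ = D ^ (k + 1) * μ (ball x s) := by ring

lemma isOpenPosMeasure (hμ : IsBallDoubling μ D) (h0 : μ ≠ 0) : μ.IsOpenPosMeasure := by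
  refine ⟨fun U hU ⟨x, hx⟩ hU0 => h0 ?_⟩
  obtain ⟨s, hs, hsU⟩ := Metric.isOpen_iff.1 hU x hx
  rw [← Measure.measure_univ_eq_zero, ← iUnion_ball_nat x, measure_iUnion_null_iff]
  intro m
  obtain ⟨k, hk⟩ := pow_unbounded_of_one_lt (m / s) one_lt_two
  refine measure_mono_null (ball_subset_ball ((div_lt_iff₀ hs).1 hk).le) ?_
  simpa [measure_mono_null hsU hU0] using hμ.measure_ball_pow_le x hs k

lemma isUnifLocDoublingMeasure (hμ : IsBallDoubling μ D) : IsUnifLocDoublingMeasure μ := by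
  refine ⟨D ^ 2, eventually_mem_nhdsWithin.mono fun ε (hε : 0 < ε) x => ?_⟩
  calc μ (closedBall x (2 * ε)) ≤ μ (ball x (2 ^ 2 * ε)) := by
        gcongr; exact closedBall_subset_ball (by linarith)
    _ ≤ D ^ 2 * μ (ball x ε) := hμ.measure_ball_pow_le x hε 2
    _ ≤ ↑(D ^ 2) * μ (closedBall x ε) := by
        rw [ENNReal.coe_pow]; gcongr; exact ball_subset_closedBall

lemma exists_pairwiseDisjoint_measure_biUnion_le [SeparableSpace X] (hμ : IsBallDoubling μ D)
    {ι : Type*} (t : Set ι) (c : ι → X) (ρ : ι → ℝ) {R : ℝ} (hρ : ∀ i ∈ t, 0 < ρ i)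
    (hR : ∀ i ∈ t, ρ i ≤ R) :
    ∃ u ⊆ t, u.Countable ∧ u.PairwiseDisjoint (fun i => ball (c i) (ρ i)) ∧
      μ (⋃ i ∈ t, ball (c i) (ρ i)) ≤ D ^ 3 * ∑' i : u, μ (ball (c i) (ρ i)) := by
  obtain ⟨u, hut, hdisj, hcover⟩ :=
    Vitali.exists_disjoint_subfamily_covering_enlargement_closedBall t c ρ R hR 5 (by norm_num)
  have hdisj' : u.PairwiseDisjoint fun i => ball (c i) (ρ i) :=
    hdisj.mono fun _ => ball_subset_closedBall
  have hu : u.Countable :=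
    hdisj'.countable_of_isOpen (fun _ _ => isOpen_ball) fun i hi => nonempty_ball.2 (hρ i (hut hi))
  refine ⟨u, hut, hu, hdisj', ?_⟩
  have hsub : ⋃ i ∈ t, ball (c i) (ρ i) ⊆ ⋃ i ∈ u, ball (c i) (2 ^ 3 * ρ i) := by
    refine iUnion₂_subset fun i hi => ?_
    obtain ⟨j, hj, hij⟩ := hcover i hi
    refine (ball_subset_closedBall.trans hij).trans ((closedBall_subset_ball ?_).trans
      (subset_biUnion_of_mem (u := fun j => ball (c j) (2 ^ 3 * ρ j)) hj))
    linarith [hρ j (hut hj)]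
  calc μ (⋃ i ∈ t, ball (c i) (ρ i)) ≤ ∑' i : u, μ (ball (c i) (2 ^ 3 * ρ i)) :=
        (measure_mono hsub).trans (measure_biUnion_le μ hu _)
    _ ≤ ∑' i : u, D ^ 3 * μ (ball (c i) (ρ i)) :=
        ENNReal.tsum_le_tsum fun i => hμ.measure_ball_pow_le _ (hρ i (hut i.2)) 3
    _ = D ^ 3 * ∑' i : u, μ (ball (c i) (ρ i)) := ENNReal.tsum_mul_left

lemma mul_measure_le_of_forall_mem_ball [SeparableSpace X] [OpensMeasurableSpace X]
    (hμ : IsBallDoubling μ D) {S T F : Set X} (hF : MeasurableSet F) {a : ℝ≥0∞} {R : ℝ}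
    (h : ∀ x ∈ S, ∃ c, ∃ ρ ≤ R, x ∈ ball c ρ ∧ ball c ρ ⊆ T ∧
      a * μ (ball c ρ) ≤ μ (F ∩ ball c ρ)) :
    a * μ S ≤ D ^ 3 * μ (F ∩ T) := by
  choose! c ρ hρR hx hT hF' using h
  obtain ⟨u, huS, hu, hdisj, hle⟩ := hμ.exists_pairwiseDisjoint_measure_biUnion_le S c ρ
    (fun x hxS => pos_of_mem_ball (hx x hxS)) hρR
  calc a * μ S ≤ a * (D ^ 3 * ∑' x : u, μ (ball (c x) (ρ x))) := by
        gcongr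
        exact (measure_mono fun x hxS => mem_biUnion hxS (hx x hxS)).trans hle
    _ = D ^ 3 * ∑' x : u, a * μ (ball (c x) (ρ x)) := by rw [ENNReal.tsum_mul_left]; ring
    _ ≤ D ^ 3 * ∑' x : u, μ (F ∩ ball (c x) (ρ x)) := by
        gcongr with x; exact hF' x (huS x.2)
    _ = D ^ 3 * μ (⋃ x ∈ u, F ∩ ball (c x) (ρ x)) := by
        rw [measure_biUnion hu (hdisj.mono fun _ => inter_subset_right)
          fun x _ => hF.inter measurableSet_ball]
    _ ≤ D ^ 3 * μ (F ∩ T) := by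
        gcongr
        exact iUnion₂_subset fun x hxu => inter_subset_inter_right _ (hT x (huS hxu))

end IsBallDoubling

/-- The open balls of positive radius, as a collection with respect to which halos are taken. -/
def openBalls (X : Type*) [PseudoMetricSpace X] : Set (Set X) :=
  {B | ∃ (x : X) (s : ℝ), 0 < s ∧ B = ball x s}

lemma isOpen_of_mem_openBalls {X : Type*} [PseudoMetricSpace X] {B : Set X}
    (hB : B ∈ openBalls X) : IsOpen B := by
  obtain ⟨x, s, -, rfl⟩ := hB
  exact isOpen_ball

section ProperSpace

variable {X : Type*} [PseudoMetricSpace X] [ProperSpace X] [MeasurableSpace X]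
  {μ : Measure X} [IsFiniteMeasureOnCompacts μ]

lemma continuousAt_measure_ball [OpensMeasurableSpace X] {x : X} {t : ℝ}
    (ht : μ (sphere x t) = 0) : ContinuousAt (fun s => μ (ball x s)) t := by
  refine tendsto_measure_of_ae_tendsto_indicator (𝓝 t) measurableSet_ball
    (fun _ => measurableSet_ball) measurableSet_ball (measure_ball_lt_top (x := x) (r := t + 1)).ne
    ((eventually_le_nhds (lt_add_one t)).mono fun s hs => ball_subset_ball hs) ?_
  filter_upwards [measure_eq_zero_iff_ae_notMem.1 ht] with y hy
  rcases lt_or_gt_of_ne hy with h | h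
  · filter_upwards [eventually_gt_nhds h] with s hs
    simp only [mem_ball, hs, h]
  · filter_upwards [eventually_lt_nhds h] with s hs
    simp only [mem_ball, not_lt.2 hs.le, not_lt.2 h.le]

variable [μ.IsOpenPosMeasure] {g : ℝ≥0∞}

lemma mul_measure_ball_lt_mul_measure_ball {r : ℝ≥0∞} (hgr : g < r) (x : X) {s : ℝ} (hs : 0 < s) :
    g * μ (ball x s) < r * μ (ball x s) :=
  (ENNReal.mul_lt_mul_iff_left (measure_ball_pos μ x hs).ne' measure_ball_lt_top.ne).2 hgr

lemma ball_subset_halo_of_subset {A : Set X} {x : X} {s t : ℝ} {r : ℝ≥0∞} (hgr : g < r)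
    (ht : 0 < t) (hst : s ≤ t) (hA : ball x s ⊆ A) (h : r * μ (ball x t) ≤ μ (ball x s)) :
    ball x t ⊆ halo μ (openBalls X) g A := by
  refine subset_halo ⟨x, t, ht, rfl⟩ ?_
  calc g * μ (ball x t) < r * μ (ball x t) := mul_measure_ball_lt_mul_measure_ball hgr x ht
    _ ≤ μ (ball x s) := h
    _ ≤ μ (A ∩ ball x t) := measure_mono (subset_inter hA (ball_subset_ball hst))

lemma subset_halo_of_isOpen (hg : g < 1) {E : Set X} (hE : IsOpen E) :
    E ⊆ halo μ (openBalls X) g E := by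
  intro x hx
  obtain ⟨s, hs, hsE⟩ := Metric.isOpen_iff.1 hE x hx
  exact ball_subset_halo_of_subset hg hs le_rfl hsE (one_mul _).le (mem_ball_self hs)

lemma subset_iterate_halo_of_isOpen (hg : g < 1) {E : Set X} (hE : IsOpen E) (k : ℕ) :
    E ⊆ (halo μ (openBalls X) g)^[k] E := by
  induction k with
  | zero => rfl
  | succ k ih =>
    rw [Function.iterate_succ_apply']
    exact ih.trans
      (subset_halo_of_isOpen hg (isOpen_iterate_halo (fun _ => isOpen_of_mem_openBalls) hE k))

end ProperSpace

end BallDoubling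

section NormedSpace

lemma ball_lineMap_subset_of_isOpen {V : Type*} [NormedAddCommGroup V] [NormedSpace ℝ V]
    {E : Set V} (hE : IsOpen E) {x p : V} {s : ℝ} (hxE : x ∈ E) (hxp : x ∈ ball p s) :
    ∃ k : ℕ, ball (AffineMap.lineMap x p (2⁻¹ ^ k : ℝ)) (2⁻¹ ^ k * s) ⊆ E := by
  obtain ⟨ε, hε, hεE⟩ := Metric.isOpen_iff.1 hE x hxE
  have hs : 0 < s := pos_of_mem_ball hxp
  obtain ⟨k, hk⟩ := exists_pow_lt_of_lt_one (show 0 < ε / (2 * s) by positivity)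
    (show (2⁻¹ : ℝ) < 1 by norm_num)
  refine ⟨k, (ball_subset_ball' ?_).trans hεE⟩
  rw [dist_lineMap_left, Real.norm_of_nonneg (by positivity)]
  calc 2⁻¹ ^ k * s + 2⁻¹ ^ k * dist x p ≤ 2⁻¹ ^ k * s + 2⁻¹ ^ k * s := by
        gcongr; exact (mem_ball.1 hxp).le
    _ = 2⁻¹ ^ k * (2 * s) := by ring
    _ ≤ ε := ((lt_div_iff₀ (by positivity)).1 hk).le

variable {V : Type*} [NormedAddCommGroup V] [NormedSpace ℝ V] [MeasurableSpace V] [BorelSpace V]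
  {μ : Measure V} [IsLocallyFiniteMeasure μ]

-- The sphere is porous: near each of its points there are balls which miss it and whose radius is
-- comparable to their distance to the point, so no point is a density point.
lemma measure_sphere_eq_zero [SecondCountableTopology V] [IsUnifLocDoublingMeasure μ] (x : V)
    {s : ℝ} (hs : 0 < s) : μ (sphere x s) = 0 := by
  rw [← Measure.restrict_eq_zero, ← ae_eq_bot, ← eventually_false_iff_eq_bot]
  filter_upwards [ae_restrict_mem isClosed_sphere.measurableSet,
    IsUnifLocDoublingMeasure.ae_tendsto_measure_inter_div μ (sphere x s) 2] with y hy hdensity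
  have hys : ‖y - x‖ = s := mem_sphere_iff_norm.1 hy
  let w : ℝ → V := fun δ => y + (2 * δ / s) • (y - x)
  have hwy : ∀ δ > 0, dist y (w δ) = 2 * δ := fun δ hδ => by
    rw [dist_self_add_right, norm_smul, hys, Real.norm_of_nonneg (by positivity)]
    field_simp
  have hwx : ∀ δ > 0, dist (w δ) x = s + 2 * δ := fun δ hδ => by
    have : w δ - x = (1 + 2 * δ / s) • (y - x) := by simp only [w]; module
    rw [dist_eq_norm, this, norm_smul, hys, Real.norm_of_nonneg (by positivity)]
    field_simp
  have hmiss : ∀ δ > 0, sphere x s ∩ closedBall (w δ) δ = ∅ := fun δ hδ => by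
    refine (disjoint_left.2 fun z (hz : dist z x = s) (hzw : dist z (w δ) ≤ δ) => ?_).inter_eq
    linarith [dist_triangle_left (w δ) x z, hwx δ hδ]
  have hlim := hdensity (l := 𝓝[>] (0 : ℝ)) w id tendsto_id
    (eventually_mem_nhdsWithin.mono fun δ hδ => (hwy δ hδ).le)
  refine zero_ne_one (tendsto_nhds_unique (tendsto_const_nhds.congr' ?_) hlim)
  filter_upwards [eventually_mem_nhdsWithin] with δ hδ
  simp only [id, hmiss δ hδ, measure_empty, ENNReal.zero_div]

variable [ProperSpace V] {D : ℝ≥0} {g r : ℝ≥0∞}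

lemma IsBallDoubling.continuousOn_measure_ball (hμ : IsBallDoubling μ D) (x : V) :
    ContinuousOn (fun s => μ (ball x s)) (Ioi 0) :=
  have := hμ.isUnifLocDoublingMeasure
  fun _ ht => (continuousAt_measure_ball (measure_sphere_eq_zero x ht)).continuousWithinAt

lemma IsBallDoubling.exists_mem_Icc_measure_ball_le (hμ : IsBallDoubling μ D) (hr0 : r ≠ 0)
    (hr : r < 1) {x : V} {s t : ℝ} (hs : 0 < s) (hst : s ≤ t) {a : ℝ≥0∞} (ha : a ≤ 1)
    (h : r * a * μ (ball x t) ≤ μ (ball x s)) :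
    ∃ u ∈ Icc s t, r * μ (ball x u) ≤ μ (ball x s) ∧ a * μ (ball x t) ≤ μ (ball x u) := by
  rcases le_total (r * μ (ball x t)) (μ (ball x s)) with hle | hle
  · exact ⟨t, right_mem_Icc.2 hst, hle, mul_le_of_le_one_left zero_le ha⟩
  have hcont : ContinuousOn (fun u => r * μ (ball x u)) (Icc s t) := fun u hu =>
    ENNReal.Tendsto.const_mul ((hμ.continuousOn_measure_ball x).mono
      (fun v hv => hs.trans_le hv.1) u hu) (Or.inr hr.ne_top)
  obtain ⟨u, hu, hru⟩ := intermediate_value_Icc hst hcont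
    ⟨mul_le_of_le_one_left zero_le hr.le, hle⟩
  refine ⟨u, hu, hru.le, (ENNReal.mul_le_mul_iff_right hr0 hr.ne_top).1 ?_⟩
  rwa [← mul_assoc, show r * μ (ball x u) = μ (ball x s) from hru]

variable [μ.IsOpenPosMeasure]

lemma IsBallDoubling.ball_subset_iterate_halo_of_le (hμ : IsBallDoubling μ D) (hgr : g < r)
    (hr : r < 1) {x : V} {s t : ℝ} (hs : 0 < s) (hst : s ≤ t) {A : Set V} (hA : ball x s ⊆ A)
    {N : ℕ} (hN : r ^ (N + 1) * μ (ball x t) ≤ μ (ball x s)) :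
    ball x t ⊆ (halo μ (openBalls V) g)^[N + 1] A := by
  induction N generalizing s A with
  | zero =>
    rw [zero_add, pow_one] at hN
    exact ball_subset_halo_of_subset hgr (hs.trans_le hst) hst hA hN
  | succ N ih =>
    rw [pow_succ'] at hN
    obtain ⟨u, hu, hsu, hut⟩ := hμ.exists_mem_Icc_measure_ball_le hgr.ne_bot hr hs hst
      (pow_le_one₀ zero_le hr.le) hN
    have hu0 : 0 < u := hs.trans_le hu.1
    rw [Function.iterate_succ_apply]
    exact ih hu0 hu.2 (ball_subset_halo_of_subset hgr hu0 hu.1 hA hsu) hut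

lemma IsBallDoubling.ball_subset_iterate_halo (hμ : IsBallDoubling μ D) (hgr : g < r)
    (hr : r < 1) {N : ℕ} (hN : r ^ (N + 1) * D ^ 2 ≤ 1) {x : V} {s : ℝ} (hs : 0 < s) {A : Set V}
    (hA : ball x s ⊆ A) : ball x (2 ^ 2 * s) ⊆ (halo μ (openBalls V) g)^[N + 1] A := by
  refine hμ.ball_subset_iterate_halo_of_le hgr hr hs (by linarith) hA ?_
  calc r ^ (N + 1) * μ (ball x (2 ^ 2 * s)) ≤ r ^ (N + 1) * (D ^ 2 * μ (ball x s)) := by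
        gcongr; exact hμ.measure_ball_pow_le x hs 2
    _ = r ^ (N + 1) * D ^ 2 * μ (ball x s) := by ring
    _ ≤ μ (ball x s) := mul_le_of_le_one_left zero_le hN

-- Halving the homothets of `ball p s` centred at `x` shrinks them to `x`, hence eventually into
-- `E`; the one wanted is the last one in which `E` has density at most `g`.
lemma exists_ball_lineMap_measure_inter_le (hg : g < 1) {E : Set V} (hE : IsOpen E) {x p : V}
    {s : ℝ} (hx : x ∈ E ∩ ball p s) (hle : μ (E ∩ ball p s) ≤ g * μ (ball p s)) :
    ∃ t ∈ Ioc (0 : ℝ) 1,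
      μ (E ∩ ball (AffineMap.lineMap x p t) (t * s)) ≤
        g * μ (ball (AffineMap.lineMap x p t) (t * s)) ∧
      g * μ (ball (AffineMap.lineMap x p (2⁻¹ * t)) (2⁻¹ * t * s)) <
        μ (E ∩ ball (AffineMap.lineMap x p (2⁻¹ * t)) (2⁻¹ * t * s)) := by
  let B : ℕ → Set V := fun k => ball (AffineMap.lineMap x p (2⁻¹ ^ k : ℝ)) (2⁻¹ ^ k * s)
  obtain ⟨m, hm⟩ := ball_lineMap_subset_of_isOpen hE hx.1 hx.2
  have hdense : g * μ (B m) < μ (E ∩ B m) := by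
    have hs : 0 < s := pos_of_mem_ball hx.2
    simpa only [B, inter_eq_right.2 hm, one_mul] using
      mul_measure_ball_lt_mul_measure_ball (μ := μ) hg (AffineMap.lineMap x p (2⁻¹ ^ m : ℝ))
        (show 0 < 2⁻¹ ^ m * s by positivity)
  obtain ⟨k, hk, hk'⟩ : ∃ k, μ (E ∩ B k) ≤ g * μ (B k) ∧
      g * μ (B (k + 1)) < μ (E ∩ B (k + 1)) := by
    by_contra! hstep
    refine hdense.not_ge (Nat.rec ?_ hstep m)
    simpa only [B, pow_zero, one_mul, AffineMap.lineMap_apply_one] using hle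
  refine ⟨2⁻¹ ^ k, ⟨by positivity, pow_le_one₀ (by norm_num) (by norm_num)⟩, hk, ?_⟩
  simpa only [B, pow_succ'] using hk'

lemma IsBallDoubling.exists_ball_subset_iterate_halo (hμ : IsBallDoubling μ D) (hgr : g < r)
    (hr : r < 1) {N : ℕ} (hN : r ^ (N + 1) * D ^ 2 ≤ 1) {E : Set V} (hE : IsOpen E) {p : V} {s : ℝ}
    (hle : μ (E ∩ ball p s) ≤ g * μ (ball p s)) {x : V} (hx : x ∈ E ∩ ball p s) :
    ∃ c, ∃ ρ ≤ s, x ∈ ball c ρ ∧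
      ball c ρ ⊆ (halo μ (openBalls V) g)^[N + 2] E ∩ ball p s ∧
      μ (E ∩ ball c ρ) ≤ g * μ (ball c ρ) := by
  have hs : 0 < s := pos_of_mem_ball hx.2
  have hxp : dist x p < s := hx.2
  obtain ⟨t, ⟨ht0, ht1⟩, hsparse, hdense⟩ :=
    exists_ball_lineMap_measure_inter_le (hgr.trans hr) hE hx hle
  have hparent : ball (AffineMap.lineMap x p t) (t * s) ⊆
      ball (AffineMap.lineMap x p (2⁻¹ * t)) (2 ^ 2 * (2⁻¹ * t * s)) := by
    refine ball_subset_ball' ?_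
    rw [dist_lineMap_lineMap, Real.dist_eq, show t - 2⁻¹ * t = 2⁻¹ * t by ring,
      abs_of_pos (by positivity)]
    nlinarith
  refine ⟨AffineMap.lineMap x p t, t * s, mul_le_of_le_one_left hs.le ht1, ?_,
    subset_inter ?_ (ball_subset_ball' ?_), hsparse⟩
  · rw [mem_ball, dist_left_lineMap, Real.norm_of_nonneg ht0.le]
    gcongr
  · rw [Function.iterate_succ_apply]
    exact hparent.trans (hμ.ball_subset_iterate_halo hgr hr hN (by positivity)
      (subset_halo ⟨_, _, by positivity, rfl⟩ hdense))
  · rw [dist_lineMap_right, Real.norm_of_nonneg (sub_nonneg.2 ht1)]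
    nlinarith

lemma IsBallDoubling.measure_inter_ball_le_mul (hμ : IsBallDoubling μ D) (hgr : g < r) (hr : r < 1)
    {N : ℕ} (hN : r ^ (N + 1) * D ^ 2 ≤ 1) {θ : ℝ≥0∞} (hθ : D ^ 3 ≤ θ * (D ^ 3 + (1 - g)))
    {E : Set V} (hE : IsOpen E) {p : V} {s : ℝ}
    (hle : μ (E ∩ ball p s) ≤ g * μ (ball p s)) :
    μ (E ∩ ball p s) ≤ θ * μ ((halo μ (openBalls V) g)^[N + 2] E ∩ ball p s) := by
  set H := (halo μ (openBalls V) g)^[N + 2] E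
  have hEH : E ⊆ H := subset_iterate_halo_of_isOpen (hgr.trans hr) hE _
  have hsplit : ∀ A, μ (E ∩ A) + μ (Eᶜ ∩ A) = μ A := fun A => by
    simpa only [sdiff_eq, inter_comm A] using measure_inter_add_sdiff A hE.measurableSet
  have hgain : (1 - g) * μ (E ∩ ball p s) ≤ D ^ 3 * μ (Eᶜ ∩ (H ∩ ball p s)) := by
    refine hμ.mul_measure_le_of_forall_mem_ball (R := s) hE.measurableSet.compl fun x hx => ?_
    obtain ⟨c, ρ, hρ, hxc, hsub, hsparse⟩ :=
      hμ.exists_ball_subset_iterate_halo hgr hr hN hE hle hx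
    refine ⟨c, ρ, hρ, hxc, hsub, ?_⟩
    rw [ENNReal.sub_mul fun _ _ => measure_ball_lt_top.ne, one_mul, tsub_le_iff_left]
    exact (hsplit _).ge.trans (by gcongr)
  have hpos : D ^ 3 + (1 - g) ≠ 0 := fun h =>
    (tsub_pos_of_lt (hgr.trans hr)).ne' (add_eq_zero.1 h).2
  refine (ENNReal.mul_le_mul_iff_right hpos (by finiteness)).1 ?_
  calc (D ^ 3 + (1 - g)) * μ (E ∩ ball p s)
      = D ^ 3 * μ (E ∩ ball p s) + (1 - g) * μ (E ∩ ball p s) := add_mul ..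
    _ ≤ D ^ 3 * μ (E ∩ (H ∩ ball p s)) + D ^ 3 * μ (Eᶜ ∩ (H ∩ ball p s)) := by
        rw [← inter_assoc, inter_eq_left.2 hEH]; gcongr
    _ = D ^ 3 * μ (H ∩ ball p s) := by rw [← mul_add, hsplit]
    _ ≤ θ * (D ^ 3 + (1 - g)) * μ (H ∩ ball p s) := by gcongr
    _ = (D ^ 3 + (1 - g)) * (θ * μ (H ∩ ball p s)) := by ring

lemma IsBallDoubling.ball_subset_iterate_halo_of_pow_mul_lt (hμ : IsBallDoubling μ D) (hgr : g < r)
    (hr : r < 1) {N : ℕ} (hN : r ^ (N + 1) * D ^ 2 ≤ 1) {θ : ℝ≥0∞} (hθ0 : θ ≠ 0) (hθt : θ ≠ ∞)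
    (hθ : D ^ 3 ≤ θ * (D ^ 3 + (1 - g))) {E : Set V} (hE : IsOpen E) {p : V} {s : ℝ} (hs : 0 < s)
    {k : ℕ} (hk : θ ^ k * μ (ball p s) < μ (E ∩ ball p s)) :
    ball p s ⊆ (halo μ (openBalls V) g)^[(N + 2) * k] E := by
  induction k generalizing E with
  | zero =>
    rw [pow_zero, one_mul] at hk
    exact absurd (measure_mono inter_subset_right) hk.not_ge
  | succ k ih =>
    have hH : ∀ j, IsOpen ((halo μ (openBalls V) g)^[j] E) :=
      isOpen_iterate_halo (fun _ => isOpen_of_mem_openBalls) hE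
    rcases le_or_gt (μ (E ∩ ball p s)) (g * μ (ball p s)) with hle | hlt
    · have hgain := hk.trans_le (hμ.measure_inter_ball_le_mul hgr hr hN hθ hE hle)
      rw [pow_succ', mul_assoc, ENNReal.mul_lt_mul_iff_right hθ0 hθt] at hgain
      rw [mul_add_one, Function.iterate_add_apply]
      exact ih (hH _) hgain
    · rw [mul_add_one, ← add_assoc, Function.iterate_succ_apply']
      refine subset_trans ?_ (halo_mono (subset_iterate_halo_of_isOpen (hgr.trans hr) hE _))
      exact subset_halo ⟨p, s, hs, rfl⟩ hlt

end NormedSpace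

lemma exists_mem_Ioo_le_mul_add {a b : ℝ≥0∞} (ha : a ≠ ∞) (hb : b ≠ 0) (hb' : b ≠ ∞) :
    ∃ θ ∈ Ioo (0 : ℝ≥0∞) 1, a ≤ θ * (a + b) := by
  have hab : a + b ≠ 0 := fun h => hb (add_eq_zero.1 h).2
  refine ⟨max 2⁻¹ (a / (a + b)), ⟨lt_max_of_lt_left (by simp), max_lt (by simp) ?_⟩, ?_⟩
  · exact ENNReal.div_lt_of_lt_mul (by simpa only [one_mul] using ENNReal.lt_add_right ha hb)
  · calc a = a / (a + b) * (a + b) := (ENNReal.div_mul_cancel hab (by finiteness)).symm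
      _ ≤ _ := by gcongr; exact le_max_right ..

lemma exists_forall_ball_subset_iterate_halo (D : ℝ≥0) {g : ℝ≥0∞} (hg : g < 1) :
    ∃ θ ∈ Ioo (0 : ℝ≥0∞) 1, ∃ M : ℕ, ∀ (V : Type*) [NormedAddCommGroup V] [NormedSpace ℝ V]
      [ProperSpace V] [MeasurableSpace V] [BorelSpace V] (μ : Measure V) [IsLocallyFiniteMeasure μ],
      IsBallDoubling μ D → ∀ {E : Set V}, IsOpen E → ∀ (p : V) (s : ℝ) (k : ℕ),
        θ ^ k * μ (ball p s) < μ (E ∩ ball p s) →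
          ball p s ⊆ (halo μ (openBalls V) g)^[M * k] E := by
  obtain ⟨r, hgr, hr⟩ := exists_between hg
  obtain ⟨N, hN⟩ : ∃ N : ℕ, r ^ (N + 1) * D ^ 2 ≤ 1 := by
    have hlim : Tendsto (fun N : ℕ => r ^ (N + 1) * D ^ 2) atTop (𝓝 (0 * D ^ 2)) :=
      ENNReal.Tendsto.mul_const ((tendsto_add_atTop_iff_nat 1).2
        (ENNReal.tendsto_pow_atTop_nhds_zero_of_lt_one hr)) (Or.inr (by finiteness))
    rw [zero_mul] at hlim
    exact (hlim.eventually_le_const one_pos).exists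
  obtain ⟨θ, hθ, hgain⟩ := exists_mem_Ioo_le_mul_add (a := D ^ 3) (by finiteness)
    (tsub_pos_of_lt hg).ne' (by finiteness)
  refine ⟨θ, hθ, N + 2, fun V _ _ _ _ _ μ _ hμ E hE p s k hk => ?_⟩
  have hpos : μ (E ∩ ball p s) ≠ 0 := (zero_le.trans_lt hk).ne'
  have := hμ.isOpenPosMeasure fun h0 => hpos (by simp [h0])
  obtain ⟨x, -, hx⟩ := nonempty_of_measure_ne_zero hpos
  exact hμ.ball_subset_iterate_halo_of_pow_mul_lt hgr hr hN hθ.1.ne' hθ.2.ne_top hgain hE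
    (pos_of_mem_ball hx) hk

lemma setOf_lt_maxOp_indicator_one {n : ℕ} {μ : Measure (EuclideanSpace ℝ (Fin n))}
    {𝔊 : Set (Set (EuclideanSpace ℝ (Fin n)))} (h𝔊 : ∀ B ∈ 𝔊, μ B ≠ ∞)
    {E : Set (EuclideanSpace ℝ (Fin n))} (hE : MeasurableSet E) (a : ℝ≥0∞) :
    {x | a < maxOp μ 𝔊 (E.indicator 1) x} = halo μ 𝔊 a E := by
  have hint : ∀ B, ∫⁻ y in B, ENNReal.ofReal |E.indicator 1 y| ∂μ = μ (E ∩ B) := fun B => by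
    have : (fun y => ENNReal.ofReal |E.indicator 1 y|) = E.indicator 1 := by
      ext y
      by_cases hy : y ∈ E <;> simp [hy]
    rw [this, lintegral_indicator_one hE, Measure.restrict_apply hE]
  ext x
  simp only [maxOp, mem_ofPred_eq, lt_iSup_iff, hint, exists_prop, halo, mem_sUnion]
  refine exists_congr fun B => ⟨fun ⟨hB, hx, h0, h⟩ => ⟨⟨hB, ?_⟩, hx⟩,
    fun ⟨⟨hB, h⟩, hx⟩ => ⟨hB, hx, ?_⟩⟩
  · exact (ENNReal.lt_div_iff_mul_lt (.inl h0.ne') (.inl (h𝔊 B hB))).1 h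
  · have h0 : μ B ≠ 0 := fun h0 =>
      h.ne_bot (le_bot_iff.1 ((measure_mono inter_subset_right).trans h0.le))
    exact ⟨h0.bot_lt, (ENNReal.lt_div_iff_mul_lt (.inl h0) (.inl (h𝔊 B hB))).2 h⟩

section AffineBall

lemma image_ball_add_smul {V F : Type*} [NormedAddCommGroup V] [NormedSpace ℝ V]
    [NormedAddCommGroup F] [NormedSpace ℝ F] (L : V ≃L[ℝ] F) (y p : V) {c : ℝ} (hc : 0 < c)
    (s : ℝ) : L '' ball (y + c • p) (c * s) = L y +ᵥ c • (L '' ball p s) := by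
  rw [← image_smul_set, ← image_vadd_distrib, _root_.smul_ball hc.ne', vadd_ball, vadd_eq_add,
    Real.norm_of_nonneg hc.le]

/-- `R` is an affine image of the open unit ball of some norm, i.e. a nonempty bounded open convex
set which is symmetric about one of its points. -/
def IsAffineBall.{u} {F : Type u} [NormedAddCommGroup F] [NormedSpace ℝ F] (R : Set F) : Prop :=
  ∃ (V : Type u) (_ : NormedAddCommGroup V) (_ : NormedSpace ℝ V) (L : V ≃L[ℝ] F) (y : F),
    R = y +ᵥ L '' ball (0 : V) 1

namespace IsAffineBall

variable {F : Type*} [NormedAddCommGroup F] [NormedSpace ℝ F] {R : Set F}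

lemma isOpen (hR : IsAffineBall R) : IsOpen R := by
  obtain ⟨V, _, _, L, y, rfl⟩ := hR
  exact (L.toHomeomorph.isOpenMap _ isOpen_ball).vadd y

lemma isBounded (hR : IsAffineBall R) : Bornology.IsBounded R := by
  obtain ⟨V, _, _, L, y, rfl⟩ := hR
  exact (L.lipschitz.isBounded_image isBounded_ball).vadd y

lemma image_isometryEquiv (hR : IsAffineBall R) (f : F ≃ᵢ F) : IsAffineBall (f '' R) := by
  obtain ⟨V, _, _, L, y, rfl⟩ := hR
  let A := f.toRealAffineIsometryEquiv
  refine ⟨V, _, _, L.trans A.linearIsometryEquiv.toContinuousLinearEquiv, f y, ?_⟩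
  have hf : ∀ z, f (y + z) = f y + A.linearIsometryEquiv z := fun z => by
    simpa [A, add_comm] using A.map_vadd y z
  simp only [← image_vadd, image_image, vadd_eq_add, hf, ContinuousLinearEquiv.trans_apply,
    LinearIsometryEquiv.coe_toContinuousLinearEquiv]

end IsAffineBall

lemma IsAxisRect.isAffineBall {n : ℕ} {S : Set (EuclideanSpace ℝ (Fin n))} (hS : IsAxisRect S) :
    IsAffineBall S := by
  obtain ⟨a, b, hab, rfl⟩ := hS
  have hl : ∀ i, 0 < (b i - a i) / 2 := fun i => half_pos (sub_pos.2 (hab i))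
  let L : (Fin n → ℝ) ≃L[ℝ] EuclideanSpace ℝ (Fin n) :=
    (ContinuousLinearEquiv.piCongrRight fun i =>
      ContinuousLinearEquiv.smulLeft (Units.mk0 ((b i - a i) / 2) (hl i).ne')).trans
        (EuclideanSpace.equiv (Fin n) ℝ).symm
  refine ⟨Fin n → ℝ, _, _, L, WithLp.toLp 2 fun i => (a i + b i) / 2, ?_⟩
  have hL : ∀ z i, L.symm z i = ((b i - a i) / 2)⁻¹ * z i := fun z i => rfl
  ext x
  rw [mem_vadd_set_iff_neg_vadd_mem, L.image_eq_preimage_symm, mem_preimage, mem_ball_zero_iff,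
    pi_norm_lt_iff one_pos]
  refine forall_congr' fun i => ?_
  rw [hL, norm_mul, norm_inv, Real.norm_of_nonneg (hl i).le, inv_mul_lt_one₀ (hl i),
    Real.norm_eq_abs, abs_lt, mem_Ioo, vadd_eq_add, PiLp.add_apply, PiLp.neg_apply]
  constructor <;> rintro ⟨h₁, h₂⟩ <;> constructor <;> linarith

lemma IsRect.isAffineBall {n : ℕ} {R : Set (EuclideanSpace ℝ (Fin n))} (hR : IsRect R) :
    IsAffineBall R := by
  obtain ⟨f, S, hS, rfl⟩ := hR
  exact hS.isAffineBall.image_isometryEquiv f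

variable {n : ℕ} {𝔊 : Set (Set (EuclideanSpace ℝ (Fin n)))} {V : Type*} [NormedAddCommGroup V]
  [NormedSpace ℝ V] {L : V ≃L[ℝ] EuclideanSpace ℝ (Fin n)}

lemma HomothecyInvariant.image_ball_mem (hhom : HomothecyInvariant 𝔊)
    {y : EuclideanSpace ℝ (Fin n)} (hy : y +ᵥ L '' ball (0 : V) 1 ∈ 𝔊) (p : V) {s : ℝ}
    (hs : 0 < s) : L '' ball p s ∈ 𝔊 := by
  have h0 : L '' ball (0 : V) 1 ∈ 𝔊 := by simpa using (hhom _ hy).1 (-y)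
  have himage := image_ball_add_smul L p 0 hs 1
  rw [smul_zero, add_zero, mul_one] at himage
  exact himage ▸ (hhom _ ((hhom _ h0).2 s hs)).1 (L p)

lemma DoublingWrt.isBallDoubling_comap {μ : Measure (EuclideanSpace ℝ (Fin n))} {Δ : ℝ}
    (hdbl : DoublingWrt μ 𝔊 Δ) [MeasurableSpace V] [BorelSpace V]
    (hL : ∀ (p : V) (s : ℝ), 0 < s → L '' ball p s ∈ 𝔊) :
    IsBallDoubling (μ.comap L) Δ.toNNReal := fun p s hs => by
  have himage := image_ball_add_smul L (-p) p two_pos s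
  rw [show -p + (2 : ℝ) • p = p by module] at himage
  have hemb : MeasurableEmbedding L := L.toHomeomorph.measurableEmbedding
  rw [hemb.comap_apply, hemb.comap_apply]
  exact himage ▸ hdbl _ (hL p s hs) (L (-p)) (himage ▸ image_mono (ball_subset_ball (by linarith)))

end AffineBall

lemma exists_forall_halo_pow_subset_iterate_halo {n : ℕ}
    {𝔊 : Set (Set (EuclideanSpace ℝ (Fin n)))} (hG : ∀ R ∈ 𝔊, IsAffineBall R)
    (hhom : HomothecyInvariant 𝔊) {μ : Measure (EuclideanSpace ℝ (Fin n))}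
    [IsLocallyFiniteMeasure μ] {Δ : ℝ} (hdbl : DoublingWrt μ 𝔊 Δ) {g : ℝ≥0∞} (hg : g < 1) :
    ∃ θ ∈ Ioo (0 : ℝ≥0∞) 1, ∃ M : ℕ, ∀ {E : Set (EuclideanSpace ℝ (Fin n))}, IsOpen E →
      ∀ k, halo μ 𝔊 (θ ^ k) E ⊆ (halo μ 𝔊 g)^[M * k] E := by
  obtain ⟨θ, hθ, M, hM⟩ := exists_forall_ball_subset_iterate_halo Δ.toNNReal hg
  refine ⟨θ, hθ, M, fun {E} hE k => sUnion_subset fun R ⟨hR, hlt⟩ => ?_⟩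
  obtain ⟨V, _, _, L, y, rfl⟩ := hG R hR
  have : FiniteDimensional ℝ V := L.symm.toLinearEquiv.finiteDimensional
  have : ProperSpace V := FiniteDimensional.proper ℝ V
  borelize V
  have hL : MeasurableEmbedding L := L.toHomeomorph.measurableEmbedding
  have := IsFiniteMeasureOnCompacts.comap' μ L.continuous hL
  have hmem : ∀ (p : V) (s : ℝ), 0 < s → L '' ball p s ∈ 𝔊 := fun p s => hhom.image_ball_mem hR p
  have hR' : y +ᵥ L '' ball 0 1 = L '' ball (L.symm y) 1 := by
    simpa using (image_ball_add_smul L (L.symm y) 0 one_pos 1).symm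
  rw [hR'] at hlt ⊢
  have hball := hM V (μ.comap L) (hdbl.isBallDoubling_comap hmem) (hE.preimage L.continuous)
    (L.symm y) 1 k (by
      rwa [hL.comap_apply, hL.comap_apply, inter_comm, image_inter_preimage, inter_comm])
  refine image_subset_iff.2 (hball.trans (iterate_halo_comap_subset hL ?_ E _))
  rintro _ ⟨p, s, hs, rfl⟩
  exact hmem p s hs

lemma exists_forall_exists_pow_le_and_pow_le_div_rpow {θ K : ℝ} (hθ : θ ∈ Ioo (0 : ℝ) 1)
    (hK : 1 < K) :
    ∃ p : ℝ, 1 < p ∧ ∀ t ∈ Ioo (0 : ℝ) 1, ∃ k : ℕ, θ ^ k ≤ t ∧ K ^ k ≤ K / t ^ p := by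
  obtain ⟨hθ0, hθ1⟩ := hθ
  set q := Real.logb θ⁻¹ K
  have hq : 0 < q := Real.logb_pos ((one_lt_inv₀ hθ0).2 hθ1) hK
  have hθq : (θ ^ q)⁻¹ = K := by
    rw [← Real.inv_rpow hθ0.le]
    exact Real.rpow_logb (by positivity) ((one_lt_inv₀ hθ0).2 hθ1).ne' (by positivity)
  refine ⟨q + 1, by linarith, fun t ⟨ht0, ht1⟩ => ?_⟩
  obtain ⟨k, hk, hk'⟩ := exists_nat_pow_near_of_lt_one ht0 ht1.le hθ0 hθ1
  refine ⟨k + 1, hk.le, ?_⟩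
  calc K ^ (k + 1) = K / (θ ^ k) ^ q := by
        rw [pow_succ', div_eq_mul_inv, ← Real.rpow_natCast_mul hθ0.le, mul_comm (k : ℝ),
          Real.rpow_mul_natCast hθ0.le, ← inv_pow, hθq]
    _ ≤ K / t ^ q := by gcongr
    _ ≤ K / t ^ (q + 1) := by
        refine div_le_div_of_nonneg_left (by positivity) (by positivity) ?_
        exact Real.rpow_le_rpow_of_exponent_ge ht0 ht1.le (by linarith)

lemma exists_forall_measure_halo_le_div_rpow {X : Type*} [TopologicalSpace X] [MeasurableSpace X]
    {μ ν : Measure X} [ν.OuterRegular] {𝔊 : Set (Set X)} (h𝔊 : ∀ B ∈ 𝔊, IsOpen B) {g θ K : ℝ≥0∞}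
    (hθ : θ ∈ Ioo 0 1) {M : ℕ}
    (hM : ∀ {E}, IsOpen E → ∀ k, halo μ 𝔊 (θ ^ k) E ⊆ (halo μ 𝔊 g)^[M * k] E) (hK : K ≠ ∞)
    (h : ∀ E, IsOpen E → ν (halo μ 𝔊 g E) ≤ K * ν E) :
    ∃ p : ℝ, 1 < p ∧ ∃ C : ℝ, 0 < C ∧ ∀ t ∈ Ioo (0 : ℝ) 1, ∀ E,
      ν (halo μ 𝔊 (ENNReal.ofReal t) E) ≤ ENNReal.ofReal (C / t ^ p) * ν E := by
  lift θ to ℝ≥0 using hθ.2.ne_top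
  obtain ⟨C, hC, hKC⟩ : ∃ C : ℝ, 1 < C ∧ K ^ M ≤ ENNReal.ofReal C := by
    refine ⟨max (K ^ M).toReal 2, by simp, ?_⟩
    rw [← ENNReal.toReal_le_toReal (by finiteness) (by finiteness), ENNReal.toReal_ofReal]
    all_goals simp
  obtain ⟨p, hp, hpow⟩ :=
    exists_forall_exists_pow_le_and_pow_le_div_rpow (θ := θ)
      ⟨mod_cast hθ.1, mod_cast hθ.2⟩ hC
  refine ⟨p, hp, C, by linarith, fun t ht E => ?_⟩
  obtain ⟨k, hθk, hCk⟩ := hpow t ht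
  have hlevel : (θ : ℝ≥0∞) ^ k ≤ ENNReal.ofReal t := by
    rw [← ENNReal.ofReal_coe_nnreal, ← ENNReal.ofReal_pow θ.coe_nonneg]
    exact ENNReal.ofReal_le_ofReal hθk
  have hpos : ENNReal.ofReal (C / t ^ p) ≠ 0 :=
    (ENNReal.ofReal_pos.2 (div_pos (by linarith) (Real.rpow_pos_of_pos ht.1 p))).ne'
  simp only [E.measure_eq_iInf_isOpen ν, ENNReal.mul_iInf_of_ne hpos ENNReal.ofReal_ne_top]
  refine le_iInf₂ fun U hEU => le_iInf fun hU => ?_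
  calc ν (halo μ 𝔊 (ENNReal.ofReal t) E) ≤ ν (halo μ 𝔊 (θ ^ k) U) :=
        measure_mono ((halo_mono hEU).trans (halo_anti hlevel))
    _ ≤ ν ((halo μ 𝔊 g)^[M * k] U) := measure_mono (hM hU k)
    _ ≤ (K ^ M) ^ k * ν U := by rw [← pow_mul]; exact measure_iterate_halo_le h𝔊 h hU _
    _ ≤ ENNReal.ofReal C ^ k * ν U := by gcongr
    _ ≤ ENNReal.ofReal (C / t ^ p) * ν U := by
        rw [← ENNReal.ofReal_pow (by linarith)]; gcongr

theorem statement19_general {n : ℕ} {𝔊 : Set (Set (EuclideanSpace ℝ (Fin n)))}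
    (hG : ∀ R ∈ 𝔊, IsAffineBall R) (hhom : HomothecyInvariant 𝔊)
    {μ ν : Measure (EuclideanSpace ℝ (Fin n))} [IsLocallyFiniteMeasure μ] [ν.OuterRegular]
    {Δ : ℝ} (hdbl : DoublingWrt μ 𝔊 Δ) {γ : ℝ} (hγ : γ < 1) {c : ℝ}
    (htaub : TauberianCond μ ν 𝔊 γ c) :
    ∃ p₀ : ℝ, 1 < p₀ ∧ ∃ C : ℝ, 0 < C ∧
      ∀ lam ∈ Set.Ioo (0 : ℝ) 1, ∀ E : Set (EuclideanSpace ℝ (Fin n)), MeasurableSet E →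
        ν {x | ENNReal.ofReal lam < maxOp μ 𝔊 (E.indicator 1) x}
          ≤ ENNReal.ofReal (C / lam ^ p₀) * ν E := by
  have hopen : ∀ R ∈ 𝔊, IsOpen R := fun R hR => (hG R hR).isOpen
  have hfin : ∀ R ∈ 𝔊, μ R ≠ ∞ := fun R hR => (hG R hR).isBounded.measure_lt_top.ne
  have hhalo : ∀ (a : ℝ≥0∞) (E : Set (EuclideanSpace ℝ (Fin n))), MeasurableSet E →
      {x | a < maxOp μ 𝔊 (E.indicator 1) x} = halo μ 𝔊 a E := fun a E hE =>
    setOf_lt_maxOp_indicator_one hfin hE a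
  obtain ⟨θ, hθ, M, hM⟩ := exists_forall_halo_pow_subset_iterate_halo hG hhom hdbl
    (ENNReal.ofReal_lt_one.2 hγ)
  obtain ⟨p, hp, C, hC, hweak⟩ := exists_forall_measure_halo_le_div_rpow (ν := ν) hopen hθ hM
    ENNReal.ofReal_ne_top fun E hE => hhalo _ E hE.measurableSet ▸ htaub E hE.measurableSet
  exact ⟨p, hp, C, hC, fun lam hlam E hE => hhalo _ E hE ▸ hweak lam hlam E⟩

/-- restricted weak type estimate, from the proof of Theorem
`t.doubling` of the paper. If `μ` is doubling w.r.t. a homothecy invariant collection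
`𝔊` of open rectangles and the Tauberian condition at some level `γ ∈ (0,1)` holds with
respect to `ν`, then there are `p₀ > 1` and `C > 0` such that
`ν({M_{𝔊,μ}(1_E) > λ}) ≤ (C/λ^{p₀})·ν(E)` for all `λ ∈ (0,1)` and all Borel `E`. -/
theorem statement19 (n : ℕ) (𝔊 : Set (Set (EuclideanSpace ℝ (Fin n))))
    (hG : ∀ R ∈ 𝔊, IsRect R) (hhom : HomothecyInvariant 𝔊)
    (μ ν : Measure (EuclideanSpace ℝ (Fin n)))
    (hlocμ : IsLocallyFiniteMeasure μ) (hlocν : IsLocallyFiniteMeasure ν)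
    (hμ : μ ≠ 0) (hdbl : ∃ Δ : ℝ, 1 < Δ ∧ DoublingWrt μ 𝔊 Δ)
    (γ : ℝ) (hγ : γ ∈ Set.Ioo (0 : ℝ) 1)
    (htaub : ∃ c : ℝ, 0 < c ∧ TauberianCond μ ν 𝔊 γ c) :
    ∃ p₀ : ℝ, 1 < p₀ ∧ ∃ C : ℝ, 0 < C ∧
      ∀ lam ∈ Set.Ioo (0 : ℝ) 1, ∀ E : Set (EuclideanSpace ℝ (Fin n)), MeasurableSet E →
        ν {x | ENNReal.ofReal lam < maxOp μ 𝔊 (E.indicator 1) x}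
          ≤ ENNReal.ofReal (C / lam ^ p₀) * ν E := by
  obtain ⟨Δ, -, hdbl⟩ := hdbl
  obtain ⟨c, -, htaub⟩ := htaub
  exact statement19_general (fun R hR => (hG R hR).isAffineBall) hhom hdbl hγ.2 htaub
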